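/- There exists a class of languages learnable by a strongly monotone behaviorally correct full-information learner from informants but not by any dual strongly monotone one: [Inf G SMon Bc] \ [Inf G SMon^d Bc] ≠ ∅; in fact the class of all finite languages witnesses this separation. -/

import Mathlib

open Filter Classical

namespace InfBc

/-! ### Basic notions: r.e. sets, informants, learners -/

/-- The `e`-th recursively enumerable set (via an acceptable numbering of
partial computable functions, `W e = dom φ_e`). -/
def W (e : ℕ) : Set ℕ := {x | ((Denumerable.ofNat Nat.Partrec.Code e).eval x).Dom}

/-- A language is recursively enumerable. -/
def RE (L : Set ℕ) : Prop := ∃ e, W e = L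

abbrev Datum := ℕ × Bool
abbrev Seq := List Datum
abbrev Informant := ℕ → Datum
abbrev HypSeq := ℕ → Part ℕ
/-- Learners are partial functions; all input types are coded into `ℕ`. -/
abbrev Learner := ℕ →. ℕ
abbrev Restriction := HypSeq → Informant → Prop

/-- Positive information of an infinite sequence. -/
def posI (I : Informant) : Set ℕ := {x | ∃ n, I n = (x, true)}
/-- Negative information of an infinite sequence. -/
def negI (I : Informant) : Set ℕ := {x | ∃ n, I n = (x, false)}

/-- `I` is an informant for the language `L`. -/
def IsInformant (I : Informant) (L : Set ℕ) : Prop := posI I = L ∧ negI I = Lᶜ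

/-- `I` is an informant (for some language), i.e. `I ∈ Inf`. -/
def IsInf (I : Informant) : Prop := IsInformant I (posI I)

/-- `I` is a canonical informant. -/
def Canonical (I : Informant) : Prop := ∀ x, I x = (x, true) ∨ I x = (x, false)

/-- `I[n]`, the length-`n` initial segment of `I`. -/
def segment (I : Informant) (n : ℕ) : Seq := (List.range n).map I

/-- Positive information of a finite sequence. -/
def posS (σ : Seq) : Set ℕ := {x | (x, true) ∈ σ}
/-- Negative information of a finite sequence. -/
def negS (σ : Seq) : Set ℕ := {x | (x, false) ∈ σ}
/-- The content of a finite sequence, as a set. -/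
def contentS (σ : Seq) : Set Datum := {a | a ∈ σ}

/-! ### Interaction operators -/

abbrev InteractionOperator := Learner → Informant → HypSeq

/-- Full-information (Gold-style) interaction: `G(h,I)(i) = h(I[i])`. -/
def Gop : InteractionOperator := fun h I i => h (Encodable.encode (segment I i))

/-- Set-driven interaction: `Sd(h,I)(i) = h(content(I[i]))`. -/
def Sdop : InteractionOperator := fun h I i => h (Encodable.encode (segment I i).toFinset)

/-- The iterated evaluation of an iterative learner on a finite sequence:
start with the initial hypothesis `h(none)` and feed the data one by one. -/
def iterExtend (h : Learner) (σ : Seq) : Part ℕ :=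
  σ.foldl (fun pe a => pe.bind fun e => h (Encodable.encode (some (e, a))))
    (h (Encodable.encode (none : Option (ℕ × Datum))))

/-- Iterative interaction: `It(h,I)(i)` is obtained by feeding `I[i]` one datum
at a time, each time updating the previous hypothesis. -/
def Itop : InteractionOperator := fun h I i => iterExtend h (segment I i)

/-- An iterative learner is confluent if the order and multiplicity in which
the content is presented does not matter. -/
def ConfluentLearner (h : Learner) : Prop :=
  ∀ σ τ : Seq, contentS σ = contentS τ → iterExtend h σ = iterExtend h τ

/-- Confluently iterative interaction. -/
noncomputable def CflItop : InteractionOperator := fun h I i =>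
  if ConfluentLearner h then iterExtend h (segment I i) else Part.none

/-- `β ≼ β'`: every (partial computable) `β`-learner can be translated into a
`β'`-learner with the same hypothesis sequence on every informant. -/
def OpLe (β β' : InteractionOperator) : Prop :=
  ∀ h : Learner, Partrec h → ∃ h' : Learner, Partrec h' ∧
    ∀ I : Informant, IsInf I → ∀ n, β h I n = β' h' I n

/-! ### Learning restrictions -/

/-- The trivial restriction `T`. -/
def TT : Restriction := fun _ _ => True

/-- Explanatory identification. -/
def Ex : Restriction := fun p I =>
  ∃ q, W q = posI I ∧ ∀ᶠ n in atTop, p n = Part.some q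

/-- Behaviorally correct identification. -/
def Bc : Restriction := fun p I => ∀ᶠ n in atTop, ∃ e ∈ p n, W e = posI I

/-- Consistency of a hypothesis with a finite sequence of data. -/
def ConsH (e : ℕ) (σ : Seq) : Prop := posS σ ⊆ W e ∧ negS σ ∩ W e = ∅

/-- Consistency of a hypothesis sequence with an informant. -/
def Cons : Restriction := fun p I => ∀ n, ∃ e ∈ p n, ConsH e (segment I n)

/-- Strongly monotone. -/
def SMon : Restriction := fun p _ =>
  ∀ s t, s ≤ t → ∀ e ∈ p s, ∀ e' ∈ p t, W e ⊆ W e'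

/-- Dual strongly monotone. -/
def SMond : Restriction := fun p _ =>
  ∀ s t, s ≤ t → ∀ e ∈ p s, ∀ e' ∈ p t, W e' ⊆ W e

/-- Monotone. -/
def Mon : Restriction := fun p I =>
  ∀ s t, s ≤ t → ∀ e ∈ p s, ∀ e' ∈ p t, W e ∩ posI I ⊆ W e' ∩ posI I

/-- Dual monotone. -/
def Mond : Restriction := fun p I =>
  ∀ s t, s ≤ t → ∀ e ∈ p s, ∀ e' ∈ p t, (W e)ᶜ ∩ negI I ⊆ (W e')ᶜ ∩ negI I

/-- Weakly monotone. -/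
def WMon : Restriction := fun p I =>
  ∀ s t, s ≤ t → ∀ e ∈ p s, ConsH e (segment I t) → ∀ e' ∈ p t, W e ⊆ W e'

/-- Dual weakly monotone. -/
def WMond : Restriction := fun p I =>
  ∀ s t, s ≤ t → ∀ e ∈ p s, ConsH e (segment I t) → ∀ e' ∈ p t, W e' ⊆ W e

/-- Cautious. -/
def Caut : Restriction := fun p _ =>
  ∀ s t, s < t → ∀ e ∈ p s, ∀ e' ∈ p t, ¬ W e' ⊂ W e

/-- Target cautious. -/
def CautTar : Restriction := fun p I =>
  ∀ s, ∀ e ∈ p s, ¬ posI I ⊂ W e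

/-- Finitely cautious. -/
def CautFin : Restriction := fun p _ =>
  ∀ s t, s < t → ∀ e ∈ p s, ∀ e' ∈ p t, W e' ⊂ W e → (W e').Infinite

/-- Infinitely cautious. -/
def CautInf : Restriction := fun p _ =>
  ∀ s t, s < t → ∀ e ∈ p s, ∀ e' ∈ p t, W e' ⊂ W e → (W e').Finite

/-! ### Learnability -/

/-- The class of admissible learners: all partial computable learners. -/
def AllL : Learner → Prop := fun _ => True
/-- The class of admissible learners: total computable learners (`ℛ`). -/
def TotalL : Learner → Prop := fun h => ∀ x, (h x).Dom
/-- Admissible informants: all informants (`Inf`). -/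
def AllI : Informant → Prop := fun _ => True

/-- `h` learns `L` in the setting given by admissible informants `P`,
interaction operator `β` and local restriction `δ`. -/
def LearnsWith (P : Informant → Prop) (β : InteractionOperator) (δ : Restriction)
    (h : Learner) (L : Set ℕ) : Prop :=
  RE L ∧ ∀ I : Informant, P I → IsInformant I L → δ (β h I) I

/-- `[τ(α) C P β δ]`: the collection of all classes of languages learnable by
some learner in `C` that satisfies the global restriction `α` on all admissible
informants, under interaction operator `β` and local restriction `δ`. -/
def Learnable (α : Restriction) (C : Learner → Prop) (P : Informant → Prop)
    (β : InteractionOperator) (δ : Restriction) : Set (Set (Set ℕ)) :=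
  {𝓛 | ∃ h : Learner, Partrec h ∧ C h ∧
        (∀ I : Informant, IsInf I → P I → α (β h I) I) ∧
        ∀ L ∈ 𝓛, LearnsWith P β δ h L}

/-! ### Properties of restrictions -/

/-- A learning restriction is delayable if it is preserved under postponing
hypotheses along a non-decreasing unbounded function. -/
def Delayable (δ : Restriction) : Prop :=
  ∀ I I' : Informant, IsInf I → IsInf I' → Set.range I = Set.range I' →
    ∀ (p : HypSeq) (s : ℕ → ℕ), Monotone s → (∀ m, ∃ n, m ≤ s n) →
      δ p I → (∀ n, contentS (segment I (s n)) ⊆ contentS (segment I' n)) →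
      δ (fun n => p (s n)) I'

/-- A learning restriction is semantic if it is indifferent to replacing the
hypothesis sequence by a semantically equivalent one. -/
def Semantic (δ : Restriction) : Prop :=
  ∀ (p p' : HypSeq) (I : Informant), δ p I →
    (∀ i, (p i).Dom ↔ (p' i).Dom) →
    (∀ i, ∀ e ∈ p i, ∀ e' ∈ p' i, W e = W e') →
    δ p' I


theorem mem_primrec : PrimrecPred (fun p : Seq × ℕ => (p.2, true) ∈ p.1) := by
  have hrel : PrimrecRel (fun (a : Datum) (x : ℕ) => a = (x, true)) :=
    Primrec.eq.comp Primrec.fst (Primrec.pair Primrec.snd (Primrec.const true))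
  have h := PrimrecRel.exists_mem_list hrel
  refine PrimrecPred.of_eq h ?_
  rintro ⟨σ, x⟩
  simp

theorem exists_index : ∃ g : ℕ → ℕ, Computable g ∧
    ∀ σ : Seq, W (g (Encodable.encode σ)) = posS σ := by
  obtain ⟨D, hD⟩ := mem_primrec
  have hre : REPred (fun p : Seq × ℕ => (p.2, true) ∈ p.1) :=
    ComputablePred.to_re ⟨D, hD.to_comp⟩
  obtain ⟨c, hc⟩ := Nat.Partrec.Code.exists_code.1 hre
  refine ⟨fun n => Encodable.encode (Nat.Partrec.Code.curry c n), ?_, ?_⟩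
  · exact Computable.encode.comp
      (Nat.Partrec.Code.primrec₂_curry.to_comp.comp (Computable.const c) Computable.id)
  · intro σ
    ext x
    have e : Nat.pair (Encodable.encode σ) x = Encodable.encode (σ, x) := by
      simp
    simp only [W, posS, Set.mem_setOf_eq, Denumerable.ofNat_encode,
      Nat.Partrec.Code.eval_curry, hc, e, Encodable.encodek]
    simp [Part.assert]

theorem mem_segment {I : Informant} {n : ℕ} {a : Datum} :
    a ∈ segment I n ↔ ∃ k < n, I k = a := by
  simp [segment]

/-- The class of all finite languages witnesses
`[Inf G SMon Bc] \ [Inf G SMon^d Bc] ≠ ∅`. -/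
theorem smon_minus_dual_smon :
    {L : Set ℕ | L.Finite} ∈
      Learnable TT AllL AllI Gop (fun p I => SMon p I ∧ Bc p I) \
        Learnable TT AllL AllI Gop (fun p I => SMond p I ∧ Bc p I) := by
  constructor
  · obtain ⟨g, hg, hW⟩ := exists_index
    refine ⟨fun n => Part.some (g n), hg, trivial, fun _ _ _ => trivial, ?_⟩
    intro L hL
    have hL : L.Finite := hL
    refine ⟨⟨g (Encodable.encode (hL.toFinset.toList.map (fun x => (x, true)) : Seq)), ?_⟩, ?_⟩
    · rw [hW]
      ext x
      simp [posS]
    · rintro I - ⟨hp, -⟩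
      constructor
      · intro s t hst e he e' he'
        simp only [Gop, Part.mem_some_iff] at he he'
        subst he he'
        rw [hW, hW]
        intro x hx
        obtain ⟨k, hk, h⟩ := mem_segment.1 hx
        exact mem_segment.2 ⟨k, hk.trans_le hst, h⟩
      · have h1 : ∀ x ∈ L, ∀ᶠ n in atTop, x ∈ posS (segment I n) := by
          intro x hx
          rw [← hp] at hx
          obtain ⟨k, hk⟩ := hx
          filter_upwards [eventually_gt_atTop k] with n hn
          exact mem_segment.2 ⟨k, hn, hk⟩
        have h2 := (Filter.eventually_all_finite hL).2 h1
        filter_upwards [h2] with n hn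
        refine ⟨_, Part.mem_some _, ?_⟩
        rw [hW]
        apply Set.Subset.antisymm
        · intro x hx
          obtain ⟨k, hk, h⟩ := mem_segment.1 hx
          exact ⟨k, h⟩
        · rw [hp]
          exact hn
  · rintro ⟨h, -, -, -, hl⟩
    have h0 := (hl ∅ Set.finite_empty).2 (fun n => (n, false)) trivial
      ⟨by ext x; simp [posI], by ext x; simp [negI]⟩
    obtain ⟨n, e, he, hWe⟩ := h0.2.exists
    have hpos : posI (fun k => (k, decide (k = n))) = {n} := by
      ext x; simp [posI]
    have h1 := (hl {n} (Set.finite_singleton n)).2 (fun k => (k, decide (k = n))) trivial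
      ⟨hpos, by ext x; simp [negI]⟩
    obtain ⟨t, ⟨e', he', hWe'⟩, hnt⟩ := (h1.2.and (eventually_ge_atTop n)).exists
    have hseg : segment (fun k => (k, decide (k = n))) n = segment (fun n => (n, false)) n := by
      apply List.map_congr_left
      intro k hk
      have : k ≠ n := (List.mem_range.1 hk).ne
      simp [this]
    have hsub := h1.1 n t hnt e (by simpa only [Gop, hseg] using he) e' he'
    rw [hWe, hWe', hpos] at hsub
    have : n ∈ posI (fun n => (n, false)) := hsub rfl
    simp [posI] at this

end InfBc
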